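/- Let R ⊂ A be a split Frobenius extension of rings such that either A or R is Gorenstein regular. Then spli(A) = silp(A) = fin.dim(A) = spli(R) = silp(R) = fin.dim(R). -/

import Mathlib

universe u

section Frobenius

variable {R A : Type u} [Ring R] [Ring A]

/-- A ring extension `ι : R →+* A` (an injective ring homomorphism) is a Frobenius extension
if there is an `R`-`R`-bimodule homomorphism `τ : A → R` together with dual bases
`x i`, `y i` in `A`. -/
def IsFrobeniusExtension (ι : R →+* A) : Prop :=
  Function.Injective ι ∧
  ∃ (τ : A →+ R) (n : ℕ) (x y : Fin n → A),
    (∀ (r : R) (a : A), τ (ι r * a) = r * τ a) ∧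
    (∀ (a : A) (r : R), τ (a * ι r) = τ a * r) ∧
    (∀ a : A, ∑ i, x i * ι (τ (y i * a)) = a) ∧
    (∀ a : A, ∑ i, ι (τ (a * x i)) * y i = a)

/-- A ring extension `ι : R →+* A` is split if `R` is a direct summand of `A` as an
`R`-`R`-bimodule, i.e. there is an `R`-`R`-bimodule homomorphism `π : A → R` with
`π ∘ ι = id`. -/
def IsSplitExtension (ι : R →+* A) : Prop :=
  ∃ π : A →+ R,
    (∀ (r : R) (a : A), π (ι r * a) = r * π a) ∧
    (∀ (a : A) (r : R), π (a * ι r) = π a * r) ∧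
    (∀ r : R, π (ι r) = r)

end Frobenius

/-- `pdimLE R n M` means that `M` admits a projective resolution of length `n`. -/
def pdimLE (R : Type u) [Ring R] : ℕ → ModuleCat.{u} R → Prop
  | 0, M => Module.Projective R M
  | n + 1, M => ∃ (G : ModuleCat.{u} R) (f : G →ₗ[R] M),
      Function.Surjective f ∧ Module.Projective R G ∧
      pdimLE R n (ModuleCat.of R ↥(LinearMap.ker f))

/-- The projective dimension of a left `R`-module, in `ℕ∞`. -/
noncomputable def pdim (R : Type u) [Ring R] (M : ModuleCat.{u} R) : ℕ∞ :=
  sInf {k : ℕ∞ | ∃ n : ℕ, k = (n : ℕ∞) ∧ pdimLE R n M}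

/-- `idimLE R n M` means that `M` admits an injective coresolution of length `n`. -/
def idimLE (R : Type u) [Ring R] : ℕ → ModuleCat.{u} R → Prop
  | 0, M => Module.Injective R M
  | n + 1, M => ∃ (G : ModuleCat.{u} R) (f : M →ₗ[R] G),
      Function.Injective f ∧ Module.Injective R G ∧
      idimLE R n (ModuleCat.of R (↥G ⧸ LinearMap.range f))

/-- The injective dimension of a left `R`-module, in `ℕ∞`. -/
noncomputable def idim (R : Type u) [Ring R] (M : ModuleCat.{u} R) : ℕ∞ :=
  sInf {k : ℕ∞ | ∃ n : ℕ, k = (n : ℕ∞) ∧ idimLE R n M}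

/-- `spli Λ`: the supremum of the projective dimensions of injective left `Λ`-modules. -/
noncomputable def spli (Λ : Type u) [Ring Λ] : ℕ∞ :=
  ⨆ (M : ModuleCat.{u} Λ) (_ : Module.Injective Λ M), pdim Λ M

/-- `silp Λ`: the supremum of the injective dimensions of projective left `Λ`-modules. -/
noncomputable def silp (Λ : Type u) [Ring Λ] : ℕ∞ :=
  ⨆ (M : ModuleCat.{u} Λ) (_ : Module.Projective Λ M), idim Λ M

/-- `findim Λ`: the left finitistic dimension, the supremum of the projective dimensions of
those left `Λ`-modules having finite projective dimension. -/
noncomputable def findim (Λ : Type u) [Ring Λ] : ℕ∞ :=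
  ⨆ (M : ModuleCat.{u} Λ) (_ : pdim Λ M ≠ ⊤), pdim Λ M

/-- A ring is (left) Gorenstein regular if both `spli` and `silp` are finite. -/
def IsGorensteinRegular (Λ : Type u) [Ring Λ] : Prop :=
  spli Λ ≠ ⊤ ∧ silp Λ ≠ ⊤

/-!
For a Frobenius extension, coextension of scalars `Hom_R(A, -)` is left as well as right adjoint to
restriction of scalars. Hence both functors are exact and preserve projectives and injectives, so
neither raises projective or injective dimensions. Restriction is always faithful, and a left
`R`-linear retraction `A → R` makes coextension faithful too; then every injective module is a
retract of its image under the round trip through the other ring, and dually for projectives, which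
makes `spli` and `silp` of the two rings agree.

Over one ring, if every projective has injective dimension at most `n`, then dimension shifting
shows that a module of finite projective dimension has projective dimension at most `n`. So
`findim ≤ silp`, and dually `silp ≤ spli` when `silp` is finite, while `spli ≤ findim` when `spli`
is finite.
-/

open CategoryTheory Limits Abelian

section AbelianCategory

universe v₁ v₂ u₁ u₂

variable {C : Type u₁} [Category.{v₁} C] [Abelian C] {D : Type u₂} [Category.{v₂} D] [Abelian D]

lemma shortExact_of_projectivePresentation {X : C} (p : ProjectivePresentation X) :
    (ShortComplex.mk _ _ (kernel.condition p.f)).ShortExact :=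
  { exact := ShortComplex.exact_kernel p.f }

section ExactFunctor

variable (F : C ⥤ D) [F.PreservesZeroMorphisms] [PreservesFiniteLimits F]
  [PreservesFiniteColimits F]

lemma hasProjectiveDimensionLE_obj_of_preservesProjectiveObjects [EnoughProjectives C]
    [F.PreservesProjectiveObjects] (n : ℕ) (X : C) (hX : HasProjectiveDimensionLE X n) :
    HasProjectiveDimensionLE (F.obj X) n := by
  induction n generalizing X with
  | zero =>
    rw [← projective_iff_hasProjectiveDimensionLE_zero] at hX ⊢
    exact F.projective_obj X
  | succ n ih =>
    obtain ⟨p⟩ := EnoughProjectives.presentation X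
    have hS := shortExact_of_projectivePresentation p
    exact ((hS.map_of_exact F).hasProjectiveDimensionLT_X₃_iff n (F.projective_obj p.p)).2
      (ih _ ((hS.hasProjectiveDimensionLT_X₃_iff n p.projective).1 hX))

lemma hasInjectiveDimensionLE_obj_of_preservesInjectiveObjects [EnoughInjectives C]
    [F.PreservesInjectiveObjects] (n : ℕ) (X : C) (hX : HasInjectiveDimensionLE X n) :
    HasInjectiveDimensionLE (F.obj X) n := by
  induction n generalizing X with
  | zero =>
    have := injective_iff_hasInjectiveDimensionLT_one.2 hX
    exact injective_iff_hasInjectiveDimensionLT_one.1 (F.injective_obj X)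
  | succ n ih =>
    obtain ⟨p⟩ := EnoughInjectives.presentation X
    have hS := p.shortExact_shortComplex
    exact ((hS.map_of_exact F).hasInjectiveDimensionLT_X₃_iff n (F.injective_obj p.J)).1
      (ih _ ((hS.hasInjectiveDimensionLT_X₃_iff n p.injective).2 hX))

end ExactFunctor

section FiniteDimension

variable {n : ℕ}

lemma hasProjectiveDimensionLT_of_succ [EnoughProjectives C]
    (hP : ∀ P : C, Projective P → HasInjectiveDimensionLT P n) {k : ℕ} (hk : n ≤ k) (X : C)
    [HasProjectiveDimensionLT X (k + 1)] : HasProjectiveDimensionLT X k := by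
  let := HasExt.standard C
  refine HasProjectiveDimensionLT.mk fun i hi Y e => ?_
  obtain ⟨p⟩ := EnoughProjectives.presentation Y
  -- `Ext i X p.p ⟶ Ext i X Y ⟶ Ext (i + 1) X (ker p)` is exact, and both ends vanish.
  obtain ⟨e', rfl⟩ := Ext.covariant_sequence_exact₃ X (shortExact_of_projectivePresentation p) e
    rfl (Ext.eq_zero_of_hasProjectiveDimensionLT _ (k + 1) (by lia))
  have := hP p.p p.projective
  rw [Ext.eq_zero_of_hasInjectiveDimensionLT e' n (by lia), Ext.zero_comp]

lemma hasInjectiveDimensionLT_of_succ [EnoughInjectives C]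
    (hI : ∀ I : C, Injective I → HasProjectiveDimensionLT I n) {k : ℕ} (hk : n ≤ k) (X : C)
    [HasInjectiveDimensionLT X (k + 1)] : HasInjectiveDimensionLT X k := by
  let := HasExt.standard C
  refine HasInjectiveDimensionLT.mk fun i hi Y e => ?_
  obtain ⟨p⟩ := EnoughInjectives.presentation Y
  obtain ⟨e', rfl⟩ := Ext.contravariant_sequence_exact₁ p.shortExact_shortComplex X e rfl
    (Ext.eq_zero_of_hasInjectiveDimensionLT _ (k + 1) (by lia))
  have := hI p.J p.injective
  rw [Ext.eq_zero_of_hasProjectiveDimensionLT e' n (by lia), Ext.comp_zero]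

lemma hasProjectiveDimensionLT_of_forall_projective [EnoughProjectives C]
    (hP : ∀ P : C, Projective P → HasInjectiveDimensionLT P n) (m : ℕ) (X : C)
    [HasProjectiveDimensionLT X m] : HasProjectiveDimensionLT X n := by
  have hX : HasProjectiveDimensionLT X (n + m) := inferInstance
  refine Nat.decreasingInduction' (P := HasProjectiveDimensionLT X) (fun k _ hk h => ?_)
    (Nat.le_add_right n m) hX
  exact hasProjectiveDimensionLT_of_succ hP hk X

lemma hasInjectiveDimensionLT_of_forall_injective [EnoughInjectives C]
    (hI : ∀ I : C, Injective I → HasProjectiveDimensionLT I n) (m : ℕ) (X : C)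
    [HasInjectiveDimensionLT X m] : HasInjectiveDimensionLT X n := by
  have hX : HasInjectiveDimensionLT X (n + m) := inferInstance
  refine Nat.decreasingInduction' (P := HasInjectiveDimensionLT X) (fun k _ hk h => ?_)
    (Nat.le_add_right n m) hX
  exact hasInjectiveDimensionLT_of_succ hI hk X

end FiniteDimension

section AmbidextrousAdjunction

variable {F : C ⥤ D} {G : D ⥤ C} {n : ℕ}

lemma hasProjectiveDimensionLE_obj_of_triple [EnoughProjectives C] (t : Adjunction.Triple F G F)
    (X : C) (hX : HasProjectiveDimensionLE X n) : HasProjectiveDimensionLE (F.obj X) n := by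
  have := t.adj₁.isLeftAdjoint
  have := t.adj₂.isLeftAdjoint
  have := t.adj₂.isRightAdjoint
  have := Functor.preservesProjectiveObjects_of_adjunction_of_preservesEpimorphisms t.adj₁
  exact hasProjectiveDimensionLE_obj_of_preservesProjectiveObjects F n X hX

lemma hasInjectiveDimensionLE_obj_of_triple [EnoughInjectives C] (t : Adjunction.Triple F G F)
    (X : C) (hX : HasInjectiveDimensionLE X n) : HasInjectiveDimensionLE (F.obj X) n := by
  have := t.adj₁.isLeftAdjoint
  have := t.adj₁.isRightAdjoint
  have := t.adj₂.isRightAdjoint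
  have := Functor.preservesInjectiveObjects_of_adjunction_of_preservesMonomorphisms t.adj₂
  exact hasInjectiveDimensionLE_obj_of_preservesInjectiveObjects F n X hX

lemma hasProjectiveDimensionLE_of_injective_of_triple [EnoughProjectives D]
    (t : Adjunction.Triple F G F) [F.Faithful]
    (h : ∀ Y : D, Injective Y → HasProjectiveDimensionLE Y n) (X : C) [Injective X] :
    HasProjectiveDimensionLE X n := by
  have := t.adj₁.isLeftAdjoint
  have := t.adj₁.isRightAdjoint
  have hGFX : HasProjectiveDimensionLE (G.obj (F.obj X)) n :=
    hasProjectiveDimensionLE_obj_of_triple ⟨t.adj₂, t.adj₁⟩ _ (h _ (t.adj₂.map_injective X ‹_›))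
  -- `F` being faithful, the unit `X ⟶ G (F X)` is mono, hence split since `X` is injective.
  let r : Retract X (G.obj (F.obj X)) :=
    { i := t.adj₁.unit.app X
      r := Injective.factorThru (𝟙 X) (t.adj₁.unit.app X)
      retract := Injective.comp_factorThru _ _ }
  exact r.hasProjectiveDimensionLT _

lemma hasInjectiveDimensionLE_of_projective_of_triple [EnoughInjectives D]
    (t : Adjunction.Triple F G F) [F.Faithful]
    (h : ∀ Y : D, Projective Y → HasInjectiveDimensionLE Y n) (X : C) [Projective X] :
    HasInjectiveDimensionLE X n := by
  have := t.adj₂.isLeftAdjoint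
  have hGFX : HasInjectiveDimensionLE (G.obj (F.obj X)) n :=
    hasInjectiveDimensionLE_obj_of_triple ⟨t.adj₂, t.adj₁⟩ _ (h _ (t.adj₁.map_projective X ‹_›))
  let r : Retract X (G.obj (F.obj X)) :=
    { i := Projective.factorThru (𝟙 X) (t.adj₂.counit.app X)
      r := t.adj₂.counit.app X
      retract := Projective.factorThru_comp _ _ }
  exact r.hasInjectiveDimensionLT _

end AmbidextrousAdjunction

end AbelianCategory

lemma enat_le_of_forall_natCast_le {a b : ℕ∞} (h : ∀ n : ℕ, b ≤ n → a ≤ n) : a ≤ b := by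
  induction b with
  | top => exact le_top
  | coe n => exact h n le_rfl

lemma sInf_natCast_le_iff {P : ℕ → Prop} (hP : Monotone P) (n : ℕ) :
    sInf {k : ℕ∞ | ∃ m : ℕ, k = m ∧ P m} ≤ n ↔ P n := by
  refine ⟨fun h => ?_, fun h => sInf_le ⟨n, rfl, h⟩⟩
  have hne : {k : ℕ∞ | ∃ m : ℕ, k = m ∧ P m}.Nonempty := by
    by_contra! hempty
    simp [hempty] at h
  obtain ⟨m, hm, hPm⟩ := csInf_mem hne
  rw [hm, Nat.cast_le] at h
  exact hP h hPm

section ModuleDimension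

variable {Λ : Type u} [Ring Λ]

lemma pdimLE_iff_hasProjectiveDimensionLE (n : ℕ) (M : ModuleCat.{u} Λ) :
    pdimLE Λ n M ↔ HasProjectiveDimensionLE M n := by
  induction n generalizing M with
  | zero =>
    exact (IsProjective.iff_projective M).trans (projective_iff_hasProjectiveDimensionLE_zero M)
  | succ n ih =>
    constructor
    · rintro ⟨G, f, hf, hG, hker⟩
      exact ((LinearMap.shortExact_shortComplexKer hf).hasProjectiveDimensionLT_X₃_iff n
        ((IsProjective.iff_projective G).1 hG)).2 ((ih _).1 hker)
    · intro hM
      obtain ⟨p⟩ := EnoughProjectives.presentation M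
      have hf : Function.Surjective p.f.hom := (ModuleCat.epi_iff_surjective p.f).1 p.epi
      exact ⟨p.p, p.f.hom, hf, (IsProjective.iff_projective p.p).2 p.projective,
        (ih _).2 (((LinearMap.shortExact_shortComplexKer hf).hasProjectiveDimensionLT_X₃_iff n
          p.projective).1 hM)⟩

lemma shortExact_mkQ_range {M G : ModuleCat.{u} Λ} (f : M →ₗ[Λ] G) (hf : Function.Injective f) :
    (ModuleCat.shortComplexOfCompEqZero f (LinearMap.range f).mkQ
      f.exact_map_mkQ_range.linearMap_comp_eq_zero).ShortExact :=
  ModuleCat.shortComplex_shortExact _ f.exact_map_mkQ_range hf (Submodule.mkQ_surjective _)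

lemma idimLE_iff_hasInjectiveDimensionLE (n : ℕ) (M : ModuleCat.{u} Λ) :
    idimLE Λ n M ↔ HasInjectiveDimensionLE M n := by
  induction n generalizing M with
  | zero =>
    exact (Module.injective_iff_injective_object Λ M).trans
      injective_iff_hasInjectiveDimensionLT_one
  | succ n ih =>
    constructor
    · rintro ⟨G, f, hf, hG, hcoker⟩
      exact ((shortExact_mkQ_range f hf).hasInjectiveDimensionLT_X₃_iff n
        ((Module.injective_iff_injective_object Λ G).1 hG)).1 ((ih _).1 hcoker)
    · intro hM
      obtain ⟨p⟩ := EnoughInjectives.presentation M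
      have hf : Function.Injective p.f.hom := (ModuleCat.mono_iff_injective p.f).1 p.mono
      exact ⟨p.J, p.f.hom, hf, (Module.injective_iff_injective_object Λ p.J).2 p.injective,
        (ih _).2 (((shortExact_mkQ_range p.f.hom hf).hasInjectiveDimensionLT_X₃_iff n
          p.injective).2 hM)⟩

lemma pdim_le_iff (n : ℕ) (M : ModuleCat.{u} Λ) : pdim Λ M ≤ n ↔ HasProjectiveDimensionLE M n := by
  simp only [pdim, pdimLE_iff_hasProjectiveDimensionLE]
  exact sInf_natCast_le_iff (fun a b hab (_ : HasProjectiveDimensionLE M a) =>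
    hasProjectiveDimensionLT_of_ge M (a + 1) (b + 1) (by lia)) n

lemma idim_le_iff (n : ℕ) (M : ModuleCat.{u} Λ) : idim Λ M ≤ n ↔ HasInjectiveDimensionLE M n := by
  simp only [idim, idimLE_iff_hasInjectiveDimensionLE]
  exact sInf_natCast_le_iff (fun a b hab (_ : HasInjectiveDimensionLE M a) =>
    hasInjectiveDimensionLT_of_ge M (a + 1) (b + 1) (by lia)) n

variable (Λ) in
lemma spli_le_iff (n : ℕ) :
    spli Λ ≤ n ↔ ∀ M : ModuleCat.{u} Λ, Injective M → HasProjectiveDimensionLE M n := by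
  simp only [spli, iSup_le_iff, pdim_le_iff, Module.injective_iff_injective_object]

variable (Λ) in
lemma silp_le_iff (n : ℕ) :
    silp Λ ≤ n ↔ ∀ M : ModuleCat.{u} Λ, Projective M → HasInjectiveDimensionLE M n := by
  simp only [silp, iSup_le_iff, idim_le_iff, IsProjective.iff_projective]

variable (Λ) in
lemma findim_le_silp : findim Λ ≤ silp Λ := by
  refine enat_le_of_forall_natCast_le fun n hn => iSup₂_le fun M hM => ?_
  obtain ⟨m, hm⟩ := ENat.ne_top_iff_exists.1 hM
  have : HasProjectiveDimensionLE M m := (pdim_le_iff m M).1 hm.ge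
  exact (pdim_le_iff n M).2
    (hasProjectiveDimensionLT_of_forall_projective ((silp_le_iff Λ n).1 hn) (m + 1) M)

lemma spli_le_findim (h : spli Λ ≠ ⊤) : spli Λ ≤ findim Λ := by
  refine iSup₂_le fun M hM => ?_
  have hpdim : pdim Λ M ≤ spli Λ :=
    le_iSup₂ (f := fun (M : ModuleCat.{u} Λ) (_ : Module.Injective Λ M) => pdim Λ M) M hM
  exact le_iSup₂ (f := fun (M : ModuleCat.{u} Λ) (_ : pdim Λ M ≠ ⊤) => pdim Λ M) M
    (ne_top_of_le_ne_top h hpdim)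

lemma silp_le_spli (h : silp Λ ≠ ⊤) : silp Λ ≤ spli Λ := by
  obtain ⟨m, hm⟩ := ENat.ne_top_iff_exists.1 h
  refine enat_le_of_forall_natCast_le fun n hn => (silp_le_iff Λ n).2 fun P hP => ?_
  have := (silp_le_iff Λ m).1 hm.ge P hP
  exact hasInjectiveDimensionLT_of_forall_injective ((spli_le_iff Λ n).1 hn) (m + 1) P

lemma IsGorensteinRegular.spli_eq_findim (h : IsGorensteinRegular Λ) : spli Λ = findim Λ :=
  (spli_le_findim h.1).antisymm ((findim_le_silp Λ).trans (silp_le_spli h.2))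

lemma IsGorensteinRegular.silp_eq_findim (h : IsGorensteinRegular Λ) : silp Λ = findim Λ :=
  ((silp_le_spli h.2).trans (spli_le_findim h.1)).antisymm (findim_le_silp Λ)

end ModuleDimension

section RingChange

variable {R S : Type u} [Ring R] [Ring S] {F : ModuleCat.{u} R ⥤ ModuleCat.{u} S}
  {G : ModuleCat.{u} S ⥤ ModuleCat.{u} R}

lemma spli_le_spli_of_triple (t : Adjunction.Triple F G F) [F.Faithful] : spli R ≤ spli S :=
  enat_le_of_forall_natCast_le fun n hn => (spli_le_iff R n).2 fun X _ =>
    hasProjectiveDimensionLE_of_injective_of_triple t ((spli_le_iff S n).1 hn) X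

lemma silp_le_silp_of_triple (t : Adjunction.Triple F G F) [F.Faithful] : silp R ≤ silp S :=
  enat_le_of_forall_natCast_le fun n hn => (silp_le_iff R n).2 fun X _ =>
    hasInjectiveDimensionLE_of_projective_of_triple t ((silp_le_iff S n).1 hn) X

lemma spli_eq_spli_of_triple (t : Adjunction.Triple F G F) [F.Faithful] [G.Faithful] :
    spli R = spli S :=
  (spli_le_spli_of_triple t).antisymm (spli_le_spli_of_triple ⟨t.adj₂, t.adj₁⟩)

lemma silp_eq_silp_of_triple (t : Adjunction.Triple F G F) [F.Faithful] [G.Faithful] :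
    silp R = silp S :=
  (silp_le_silp_of_triple t).antisymm (silp_le_silp_of_triple ⟨t.adj₂, t.adj₁⟩)

end RingChange

section Coextension

open ModuleCat

variable {R A : Type u} [Ring R] [Ring A] {ι : R →+* A} {N : ModuleCat.{u} R}

/-- The additive map `A → N` underlying an element of the coextension `Hom_R(A, N)`. Its domain is
`A` itself, not the restriction of scalars of `A` as an object of `ModuleCat A`. -/
noncomputable def coextendEval (g : (coextendScalars.{u, u, u} ι).obj N) : A →+ N :=
  (CoextendScalars.equiv ι N g).toAddMonoidHom

lemma coextendEval_map_mul (g : (coextendScalars.{u, u, u} ι).obj N) (r : R) (a : A) :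
    coextendEval g (ι r * a) = r • coextendEval g a :=
  (CoextendScalars.equiv ι N g).map_smul r a

lemma coextendEval_ext {g h : (coextendScalars.{u, u, u} ι).obj N}
    (H : ∀ a : A, coextendEval g a = coextendEval h a) : g = h :=
  CoextendScalars.ext (LinearMap.ext H)

lemma coextendEval_sum {n : ℕ} (g : Fin n → (coextendScalars.{u, u, u} ι).obj N) (a : A) :
    coextendEval (∑ i, g i) a = ∑ i, coextendEval (g i) a :=
  map_sum (AddMonoidHom.mk' (fun h : (coextendScalars.{u, u, u} ι).obj N => coextendEval h a)
    fun _ _ => rfl) g _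

/-- The element `a ↦ f a • m` of the coextension `Hom_R(A, N)` attached to a left `R`-linear map
`f : A → R` and an element `m` of `N`. -/
noncomputable def coextendSMulRight (f : A →+ R) (hf : ∀ (r : R) (a : A), f (ι r * a) = r * f a)
    (m : N) : (coextendScalars.{u, u, u} ι).obj N :=
  (CoextendScalars.equiv ι N).symm
    { toFun := fun a : A => f a • m
      map_add' := fun a b => (congrArg (· • m) (f.map_add a b)).trans (add_smul (f a) (f b) m)
      map_smul' := fun r a => (congrArg (· • m) (hf r a)).trans (mul_smul r (f a) m) }

/-- One-sided variant of `IsSplitExtension`: `R` is a direct summand of `A` as a left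
`R`-module. -/
def IsLeftSplitExtension (ι : R →+* A) : Prop :=
  ∃ π : A →+ R, (∀ (r : R) (a : A), π (ι r * a) = r * π a) ∧ ∀ r : R, π (ι r) = r

lemma IsSplitExtension.isLeftSplitExtension (h : IsSplitExtension ι) : IsLeftSplitExtension ι :=
  let ⟨π, hleft, _, hπ⟩ := h
  ⟨π, hleft, hπ⟩

lemma IsLeftSplitExtension.faithful_coextendScalars (h : IsLeftSplitExtension ι) :
    (coextendScalars.{u, u, u} ι).Faithful where
  map_injective {M N} f g hfg := by
    obtain ⟨π, hleft, hπ⟩ := h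
    have hπ_one : π 1 = 1 := by simpa only [map_one] using hπ 1
    ext m
    have heval : f (π 1 • m) = g (π 1 • m) :=
      congrArg (fun k => coextendEval (k.hom (coextendSMulRight π hleft m)) 1) hfg
    simpa only [hπ_one, one_smul] using heval

end Coextension

/-- A Frobenius system of a ring homomorphism `ι : R →+* A`: an `R`-`R`-bimodule homomorphism
`τ : A → R` with dual bases `x`, `y` of length `n`. This is the data whose existence
`IsFrobeniusExtension` asserts. -/
structure FrobeniusSystem {R A : Type u} [Ring R] [Ring A] (ι : R →+* A) where
  τ : A →+ R
  n : ℕ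
  x : Fin n → A
  y : Fin n → A
  map_left_mul (r : R) (a : A) : τ (ι r * a) = r * τ a
  map_right_mul (a : A) (r : R) : τ (a * ι r) = τ a * r
  sum_mul_map (a : A) : ∑ i, x i * ι (τ (y i * a)) = a
  sum_map_mul (a : A) : ∑ i, ι (τ (a * x i)) * y i = a

lemma IsFrobeniusExtension.nonempty_frobeniusSystem {R A : Type u} [Ring R] [Ring A] {ι : R →+* A}
    (h : IsFrobeniusExtension ι) : Nonempty (FrobeniusSystem ι) :=
  let ⟨_, τ, n, x, y, hleft, hright, hx, hy⟩ := h
  ⟨⟨τ, n, x, y, hleft, hright, hx, hy⟩⟩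

namespace FrobeniusSystem

open ModuleCat

variable {R A : Type u} [Ring R] [Ring A] {ι : R →+* A} (Φ : FrobeniusSystem ι)

lemma sum_map_smul_eq {N : Type*} [AddCommGroup N] [Module R N] (φ : A →+ N)
    (hφ : ∀ (r : R) (a : A), φ (ι r * a) = r • φ a) (a : A) :
    ∑ j, Φ.τ (a * Φ.x j) • φ (Φ.y j) = φ a := by
  simp only [← hφ, ← map_sum, Φ.sum_map_mul]

section Module

variable {M : Type*} [AddCommGroup M] [Module A M]

lemma sum_smul_map_smul (m : M) : ∑ i, Φ.x i • ι (Φ.τ (Φ.y i)) • m = m := by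
  have h : ∑ i, Φ.x i * ι (Φ.τ (Φ.y i)) = 1 := by simpa only [mul_one] using Φ.sum_mul_map 1
  simp only [smul_smul, ← Finset.sum_smul, h, one_smul]

lemma sum_smul_map_mul (φ : A →+ M) (hφ : ∀ (r : R) (a : A), φ (ι r * a) = ι r • φ a) (a : A) :
    ∑ i, Φ.x i • φ (Φ.y i * a) = a • ∑ j, Φ.x j • φ (Φ.y j) := by
  let := Module.compHom M ι
  have hsum (b : A) : φ b = ∑ j, ι (Φ.τ (b * Φ.x j)) • φ (Φ.y j) :=
    (Φ.sum_map_smul_eq φ hφ b).symm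
  calc ∑ i, Φ.x i • φ (Φ.y i * a)
      = ∑ i, Φ.x i • ∑ j, ι (Φ.τ (Φ.y i * (a * Φ.x j))) • φ (Φ.y j) := by
        simp only [hsum (Φ.y _ * a), mul_assoc]
    _ = ∑ j, (∑ i, Φ.x i * ι (Φ.τ (Φ.y i * (a * Φ.x j)))) • φ (Φ.y j) := by
        simp only [Finset.smul_sum, Finset.sum_smul, smul_smul]
        exact Finset.sum_comm
    _ = a • ∑ j, Φ.x j • φ (Φ.y j) := by
        simp only [Φ.sum_mul_map, Finset.smul_sum, smul_smul]

end Module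

/-- The `R`-linear map `N → Hom_R(A, N)`, `m ↦ (a ↦ τ a • m)`: the unit of the adjunction
`coextendRestrictScalarsAdj`. -/
noncomputable def unit (N : ModuleCat.{u} R) :
    N ⟶ (restrictScalars.{u} ι).obj ((coextendScalars.{u, u, u} ι).obj N) :=
  ofHom (Y := (restrictScalars.{u} ι).obj ((coextendScalars.{u, u, u} ι).obj N))
    { toFun := coextendSMulRight Φ.τ Φ.map_left_mul
      map_add' := fun m m' => coextendEval_ext fun a => smul_add (Φ.τ a) m m'
      map_smul' := fun r m => coextendEval_ext fun a =>
        (smul_smul (Φ.τ a) r m).trans (congrArg (· • m) (Φ.map_right_mul a r).symm) }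

/-- The `A`-linear map `Hom_R(A, M) → M`, `g ↦ ∑ i, x i • g (y i)`: the counit of the adjunction
`coextendRestrictScalarsAdj`. -/
noncomputable def counit (M : ModuleCat.{u} A) :
    (coextendScalars.{u, u, u} ι).obj ((restrictScalars.{u} ι).obj M) ⟶ M :=
  ofHom
    { toFun := fun g : (coextendScalars.{u, u, u} ι).obj ((restrictScalars.{u} ι).obj M) =>
        ∑ i, Φ.x i • (show M from coextendEval g (Φ.y i))
      map_add' := fun g h =>
        (Finset.sum_congr rfl fun i _ => smul_add (Φ.x i) (show M from coextendEval g (Φ.y i))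
          (show M from coextendEval h (Φ.y i))).trans Finset.sum_add_distrib
      map_smul' := fun a g => by
        let φ : A →+ M := coextendEval (N := (restrictScalars.{u} ι).obj M) g
        change ∑ i, Φ.x i • φ (Φ.y i * a) = a • ∑ i, Φ.x i • φ (Φ.y i)
        exact Φ.sum_smul_map_mul φ (coextendEval_map_mul g) a }

/-- For a Frobenius system, coextension of scalars is left adjoint to restriction of scalars. -/
noncomputable def coextendRestrictScalarsAdj :
    coextendScalars.{u, u, u} ι ⊣ restrictScalars.{u} ι :=
  Adjunction.mkOfUnitCounit
    { unit :=
        { app := Φ.unit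
          naturality := fun _ _ f => by
            ext m
            exact coextendEval_ext fun a => (f.hom.map_smul (Φ.τ a) m).symm }
      counit :=
        { app := Φ.counit
          naturality := fun M N f => by
            ext g
            let φ : A →+ M := coextendEval (N := (restrictScalars.{u} ι).obj M) g
            change ∑ i, Φ.x i • f (φ (Φ.y i)) = f (∑ i, Φ.x i • φ (Φ.y i))
            simp only [map_sum, map_smul] }
      left_triangle := by
        ext N g
        exact coextendEval_ext fun a =>
          (coextendEval_sum (fun i => Φ.x i • coextendSMulRight Φ.τ Φ.map_left_mul
            (coextendEval g (Φ.y i))) a).trans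
          (Φ.sum_map_smul_eq (coextendEval g) (coextendEval_map_mul g) a)
      right_triangle := by
        ext M m
        exact Φ.sum_smul_map_smul (M := M) m }

/-- The adjoint triple `coextendScalars ι ⊣ restrictScalars ι ⊣ coextendScalars ι` of a Frobenius
system. -/
noncomputable def triple : Adjunction.Triple (coextendScalars.{u, u, u} ι) (restrictScalars.{u} ι)
    (coextendScalars.{u, u, u} ι) where
  adj₁ := Φ.coextendRestrictScalarsAdj
  adj₂ := restrictCoextendScalarsAdj.{u, u, u} ι

end FrobeniusSystem

theorem stmt11_general {R A : Type u} [Ring R] [Ring A] (ι : R →+* A)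
    (hF : IsFrobeniusExtension ι) (hS : IsLeftSplitExtension ι)
    (hreg : IsGorensteinRegular A ∨ IsGorensteinRegular R) :
    spli A = silp A ∧ silp A = findim A ∧ findim A = spli R ∧
      spli R = silp R ∧ silp R = findim R := by
  obtain ⟨Φ⟩ := hF.nonempty_frobeniusSystem
  have := hS.faithful_coextendScalars
  have hspli : spli R = spli A := spli_eq_spli_of_triple Φ.triple
  have hsilp : silp R = silp A := silp_eq_silp_of_triple Φ.triple
  have hiff : IsGorensteinRegular A ↔ IsGorensteinRegular R := by
    rw [IsGorensteinRegular, IsGorensteinRegular, hspli, hsilp]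
  have hA : IsGorensteinRegular A := hreg.elim id hiff.2
  have hR : IsGorensteinRegular R := hiff.1 hA
  exact ⟨hA.spli_eq_findim.trans hA.silp_eq_findim.symm, hA.silp_eq_findim,
    hA.spli_eq_findim.symm.trans hspli.symm,
    hR.spli_eq_findim.trans hR.silp_eq_findim.symm, hR.silp_eq_findim⟩

section Statement

variable {R A : Type u} [Ring R] [Ring A]

theorem stmt11 (ι : R →+* A) (hF : IsFrobeniusExtension ι) (hS : IsSplitExtension ι)
    (hreg : IsGorensteinRegular A ∨ IsGorensteinRegular R) :
    spli A = silp A ∧ silp A = findim A ∧ findim A = spli R ∧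
      spli R = silp R ∧ silp R = findim R :=
  stmt11_general ι hF hS.isLeftSplitExtension hreg

end Statement
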